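/- Let γ > 0, ε ≥ 0, and f ∈ [0,1]. Then the Werner state ρ_s = (γ·ρ_W(f) + ε·𝟙₄)/(γ + ε) is a steady state of the noisy entangling master equation: γ(tr(ρ_s)·ρ_W(f) − ρ_s) + (ε/2)·N(ρ_s) = 0, where N(ρ) = (tr_B ρ) ⊗ 𝟙₂ + 𝟙₂ ⊗ (tr_A ρ) − 2ρ. Moreover ρ_s = ρ_W(f_s) is again a Werner state, with reduced fidelity f_s = (γf + ε/4)/(γ + ε). -/

import Mathlib

/-!
A Werner state has unit trace and both of its marginals are maximally mixed, so `N` acts on it as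
`N(ρ) = 2·𝟙₄ − 2ρ` (`noiseN_wernerState`). Expanding `ρ_W` in `Ω` and `I₄` shows that the mixture
`ρ_s` is again a Werner state (`mix_eq_wernerState`). The left-hand side of the steady-state
equation is therefore `γ ρ_W(f) + ε 𝟙₄ − (γ + ε) ρ_s`, which vanishes by the choice of `ρ_s`.
-/

open Matrix Kronecker

/-- Standard basis vector `|ab⟩` of `ℂ² ⊗ ℂ²`. -/
noncomputable def ket2 (a b : Fin 2) : Fin 2 × Fin 2 → ℂ := Pi.single (a, b) 1

/-- The maximally entangled Bell state `ψ₀ = (|00⟩+|11⟩)/√2`. -/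
noncomputable def bell0 : Fin 2 × Fin 2 → ℂ :=
  (Real.sqrt 2 : ℂ)⁻¹ • (ket2 0 0 + ket2 1 1)

/-- `Ω = |ψ₀⟩⟨ψ₀|`. -/
noncomputable def Omega : Matrix (Fin 2 × Fin 2) (Fin 2 × Fin 2) ℂ :=
  Matrix.vecMulVec bell0 (star bell0)

/-- The Werner state of fidelity `f`: `ρ_W(f) = f·Ω + (1−f)(I₄−Ω)/3`. -/
noncomputable def wernerState (f : ℝ) : Matrix (Fin 2 × Fin 2) (Fin 2 × Fin 2) ℂ :=
  (f : ℂ) • Omega + ((1 - f : ℝ) / 3 : ℂ) • ((1 : Matrix (Fin 2 × Fin 2) (Fin 2 × Fin 2) ℂ) - Omega)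

/-- Partial trace over the second tensor factor. -/
noncomputable def trB (ρ : Matrix (Fin 2 × Fin 2) (Fin 2 × Fin 2) ℂ) :
    Matrix (Fin 2) (Fin 2) ℂ :=
  Matrix.of fun a b => ∑ k : Fin 2, ρ (a, k) (b, k)

/-- Partial trace over the first tensor factor. -/
noncomputable def trA (ρ : Matrix (Fin 2 × Fin 2) (Fin 2 × Fin 2) ℂ) :
    Matrix (Fin 2) (Fin 2) ℂ :=
  Matrix.of fun a b => ∑ k : Fin 2, ρ (k, a) (k, b)

/-- The normalized identity `𝟙₂ = I₂/2`. -/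
noncomputable def one2 : Matrix (Fin 2) (Fin 2) ℂ := (1 / 2 : ℂ) • 1

/-- The normalized identity `𝟙₄ = I₄/4`. -/
noncomputable def one4 : Matrix (Fin 2 × Fin 2) (Fin 2 × Fin 2) ℂ := (1 / 4 : ℂ) • 1

/-- The local depolarizing noise term
`N(ρ) = (tr_B ρ) ⊗ 𝟙₂ + 𝟙₂ ⊗ (tr_A ρ) − 2ρ`. -/
noncomputable def noiseN (ρ : Matrix (Fin 2 × Fin 2) (Fin 2 × Fin 2) ℂ) :
    Matrix (Fin 2 × Fin 2) (Fin 2 × Fin 2) ℂ :=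
  trB ρ ⊗ₖ one2 + one2 ⊗ₖ trA ρ - (2 : ℂ) • ρ

/-- The entries of `Ω` in the computational basis, where `√2` no longer appears. -/
lemma Omega_apply (a b c d : Fin 2) :
    Omega (a, b) (c, d) = if a = b ∧ c = d then 1 / 2 else 0 := by
  have h : ((Real.sqrt 2 : ℝ) : ℂ)⁻¹ * ((Real.sqrt 2 : ℝ) : ℂ)⁻¹ = 1 / 2 := by
    rw [← mul_inv, ← Complex.ofReal_mul, Real.mul_self_sqrt (by norm_num)]
    norm_num
  fin_cases a <;> fin_cases b <;> fin_cases c <;> fin_cases d <;>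
    simp [Omega, bell0, ket2, Matrix.vecMulVec_apply] <;> simpa using h

lemma trace_wernerState (f : ℝ) : (wernerState f).trace = 1 := by
  simp [wernerState, Matrix.trace, Fintype.sum_prod_type, Omega_apply]
  ring

lemma trB_wernerState (f : ℝ) : trB (wernerState f) = one2 := by
  ext a b
  fin_cases a <;> fin_cases b <;>
    simp [trB, one2, wernerState, Omega_apply, Matrix.one_apply] <;> ring

lemma trA_wernerState (f : ℝ) : trA (wernerState f) = one2 := by
  ext a b
  fin_cases a <;> fin_cases b <;>
    simp [trA, one2, wernerState, Omega_apply, Matrix.one_apply] <;> ring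

lemma one2_kronecker_one2 : one2 ⊗ₖ one2 = one4 := by
  rw [one2, one4, Matrix.smul_kronecker, Matrix.kronecker_smul, Matrix.one_kronecker_one, smul_smul]
  norm_num

lemma noiseN_wernerState (f : ℝ) :
    noiseN (wernerState f) = (2 : ℝ) • (one4 - wernerState f) := by
  rw [noiseN, trB_wernerState, trA_wernerState, one2_kronecker_one2]
  ext i j
  simp
  ring

lemma mix_eq_wernerState (γ ε f : ℝ) (h : γ + ε ≠ 0) :
    (γ + ε)⁻¹ • (γ • wernerState f + ε • one4) =
      wernerState ((γ * f + ε / 4) / (γ + ε)) := by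
  have h' : (γ : ℂ) + ε ≠ 0 := by exact_mod_cast h
  ext i j
  simp only [wernerState, one4, Matrix.smul_apply, Matrix.add_apply, Matrix.sub_apply,
    Complex.real_smul, smul_eq_mul]
  push_cast
  field_simp
  ring

theorem werner_steady_state_of_noisy_entangling (γ ε f : ℝ)
    (hγ : 0 < γ) (hε : 0 ≤ ε) (hf : f ∈ Set.Icc (0 : ℝ) 1) :
    let ρs : Matrix (Fin 2 × Fin 2) (Fin 2 × Fin 2) ℂ :=
      ((γ + ε : ℝ)⁻¹ : ℝ) • (γ • wernerState f + ε • one4)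
    (γ • (ρs.trace • wernerState f - ρs) + (ε / 2) • noiseN ρs = 0) ∧
      ρs = wernerState ((γ * f + ε / 4) / (γ + ε)) := by
  intro ρs
  have h : γ + ε ≠ 0 := by positivity
  have hW : ρs = wernerState ((γ * f + ε / 4) / (γ + ε)) := mix_eq_wernerState γ ε f h
  have hρ : (γ + ε) • ρs = γ • wernerState f + ε • one4 := smul_inv_smul₀ h _
  refine ⟨?_, hW⟩
  have htr : ρs.trace = 1 := by rw [hW, trace_wernerState]
  have hN : noiseN ρs = (2 : ℝ) • (one4 - ρs) := by rw [hW, noiseN_wernerState]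
  rw [htr, hN, one_smul, smul_smul, div_mul_cancel₀ ε two_ne_zero]
  calc γ • (wernerState f - ρs) + ε • (one4 - ρs)
      = (γ • wernerState f + ε • one4) - (γ + ε) • ρs := by module
    _ = 0 := by rw [hρ, sub_self]
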